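/- Let Q ∈ ℝ^{m×r} and ω ≥ 0 satisfy ‖I − QᵀQ‖ ≤ ω, let X, ΔV ∈ ℝ^{m×s}, let S ∈ ℝ^{s×s} be nonsingular, and define U = ((I − QQᵀ)X + ΔV)·S⁻¹ ∈ ℝ^{m×s}. Then σ_min((I − QQᵀ)U) ≥ σ_min(U) − (1+ω)²·(ω‖X‖ + ‖ΔV‖)·‖S⁻¹‖. -/

import Mathlib

open scoped Matrix

/-- The spectral norm (`ℓ²→ℓ²` operator norm) of a real matrix. -/
noncomputable def specNorm {m n : Type*} [Fintype m] [Fintype n] [DecidableEq n]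
    (A : Matrix m n ℝ) : ℝ :=
  ‖LinearMap.toContinuousLinearMap (Matrix.toEuclideanLin A)‖

/-- The smallest singular value of a real matrix: the infimum of `‖A x‖₂` over
unit vectors `x`. -/
noncomputable def sigmaMin {m n : Type*} [Fintype m] [Fintype n] [DecidableEq n]
    (A : Matrix m n ℝ) : ℝ :=
  sInf ((fun x : EuclideanSpace ℝ n => ‖Matrix.toEuclideanLin A x‖) ''
    {x : EuclideanSpace ℝ n | ‖x‖ = 1})

/-- The 2-norm condition number `κ(A) = ‖A‖ / σ_min(A)`. -/
noncomputable def condNum {m n : Type*} [Fintype m] [Fintype n] [DecidableEq n]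
    (A : Matrix m n ℝ) : ℝ :=
  specNorm A / sigmaMin A

/-!
Writing `U = ((I − QQᵀ)X + D)T`, the second projection changes `U` by `QQᵀU`, and
`Qᵀ(I − QQᵀ) = (I − QᵀQ)Qᵀ` moves the defect of orthogonality next to `QᵀX`:
`QQᵀU = Q((I − QᵀQ)QᵀX + QᵀD)T`. So its norm is at most `‖Q‖²(ω‖X‖ + ‖D‖)‖T‖`, where
`‖Q‖² = ‖QᵀQ‖ ≤ 1 + ω`. The least singular value is 1-Lipschitz in the spectral norm.
-/

section L2OpNorm

open scoped Matrix.Norms.L2Operator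

variable {𝕜 m r k n : Type*} [RCLike 𝕜] [Fintype m] [Fintype r] [Fintype k] [Fintype n]
  [DecidableEq r] [DecidableEq k] [DecidableEq n]

theorem l2_opNorm_sq_le_one_add (Q : Matrix m r 𝕜) : ‖Q‖ ^ 2 ≤ 1 + ‖1 - Qᴴ * Q‖ :=
  calc ‖Q‖ ^ 2 = ‖1 - (1 - Qᴴ * Q)‖ := by
        rw [sub_sub_cancel, Matrix.l2_opNorm_conjTranspose_mul_self, sq]
    _ ≤ ‖(1 : Matrix r r 𝕜)‖ + ‖1 - Qᴴ * Q‖ := norm_sub_le _ _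
    _ ≤ 1 + ‖1 - Qᴴ * Q‖ := by gcongr; exact IsStarProjection.norm_le _ (.one _)

theorem l2_opNorm_conjTranspose_mul_le (Q : Matrix m r 𝕜) (X : Matrix m k 𝕜) :
    ‖Qᴴ * X‖ ≤ ‖Q‖ * ‖X‖ := by
  classical
  grw [Matrix.l2_opNorm_mul, Matrix.l2_opNorm_conjTranspose]

variable [DecidableEq m]

theorem l2_opNorm_conjTranspose_mul_proj_add_le (Q : Matrix m r 𝕜) (X D : Matrix m k 𝕜) :
    ‖Qᴴ * ((1 - Q * Qᴴ) * X + D)‖ ≤ ‖Q‖ * (‖1 - Qᴴ * Q‖ * ‖X‖ + ‖D‖) := by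
  have push_through : Qᴴ * ((1 - Q * Qᴴ) * X + D) = (1 - Qᴴ * Q) * (Qᴴ * X) + Qᴴ * D := by
    simp only [Matrix.mul_add, Matrix.sub_mul, Matrix.mul_sub, Matrix.one_mul, Matrix.mul_assoc]
  calc ‖Qᴴ * ((1 - Q * Qᴴ) * X + D)‖
      ≤ ‖(1 - Qᴴ * Q) * (Qᴴ * X)‖ + ‖Qᴴ * D‖ := push_through ▸ norm_add_le _ _
    _ ≤ ‖1 - Qᴴ * Q‖ * (‖Q‖ * ‖X‖) + ‖Q‖ * ‖D‖ := by
        grw [Matrix.l2_opNorm_mul, l2_opNorm_conjTranspose_mul_le, l2_opNorm_conjTranspose_mul_le]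
    _ = ‖Q‖ * (‖1 - Qᴴ * Q‖ * ‖X‖ + ‖D‖) := by ring

theorem l2_opNorm_sub_proj_mul_le (Q : Matrix m r 𝕜) (X D : Matrix m k 𝕜) (T : Matrix k n 𝕜) :
    ‖((1 - Q * Qᴴ) * X + D) * T - (1 - Q * Qᴴ) * (((1 - Q * Qᴴ) * X + D) * T)‖ ≤
      ‖Q‖ ^ 2 * (‖1 - Qᴴ * Q‖ * ‖X‖ + ‖D‖) * ‖T‖ := by
  set Y := (1 - Q * Qᴴ) * X + D with hY
  calc ‖Y * T - (1 - Q * Qᴴ) * (Y * T)‖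
      = ‖Q * (Qᴴ * Y * T)‖ := by
        rw [Matrix.sub_mul, Matrix.one_mul, sub_sub_cancel]
        simp only [Matrix.mul_assoc]
    _ ≤ ‖Q‖ * (‖Qᴴ * Y‖ * ‖T‖) := by grw [Matrix.l2_opNorm_mul, Matrix.l2_opNorm_mul]
    _ ≤ ‖Q‖ * (‖Q‖ * (‖1 - Qᴴ * Q‖ * ‖X‖ + ‖D‖) * ‖T‖) := by
        grw [hY, l2_opNorm_conjTranspose_mul_proj_add_le]
    _ = ‖Q‖ ^ 2 * (‖1 - Qᴴ * Q‖ * ‖X‖ + ‖D‖) * ‖T‖ := by ring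

end L2OpNorm

section SingularValues

open scoped Matrix.Norms.L2Operator

variable {m n : Type*} [Fintype m] [Fintype n] [DecidableEq n]

theorem specNorm_eq_l2_opNorm (A : Matrix m n ℝ) : specNorm A = ‖A‖ :=
  rfl

theorem norm_toEuclideanLin_le_specNorm_mul (A : Matrix m n ℝ) (x : EuclideanSpace ℝ n) :
    ‖Matrix.toEuclideanLin A x‖ ≤ specNorm A * ‖x‖ :=
  (Matrix.toEuclideanLin A).toContinuousLinearMap.le_opNorm x

theorem sigmaMin_le_norm_toEuclideanLin (A : Matrix m n ℝ) {x : EuclideanSpace ℝ n}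
    (hx : ‖x‖ = 1) : sigmaMin A ≤ ‖Matrix.toEuclideanLin A x‖ :=
  csInf_le ⟨0, Set.forall_mem_image.2 fun _ _ => norm_nonneg _⟩ ⟨x, hx, rfl⟩

theorem sigmaMin_sub_specNorm_sub_le (A B : Matrix m n ℝ) :
    sigmaMin A - specNorm (A - B) ≤ sigmaMin B := by
  rcases Set.eq_empty_or_nonempty {x : EuclideanSpace ℝ n | ‖x‖ = 1} with no_unit | exists_unit
  · -- Without columns there is no unit vector, and both infima take the junk value `sInf ∅ = 0`.
    have sigmaMin_eq_zero (C : Matrix m n ℝ) : sigmaMin C = 0 := by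
      rw [sigmaMin, no_unit, Set.image_empty, Real.sInf_empty]
    rw [sigmaMin_eq_zero A, sigmaMin_eq_zero B, zero_sub, neg_nonpos]
    exact norm_nonneg _
  · refine le_csInf (exists_unit.image _) (Set.forall_mem_image.2 fun x hx => ?_)
    have hx : ‖x‖ = 1 := hx
    calc sigmaMin A - specNorm (A - B)
        ≤ ‖Matrix.toEuclideanLin A x‖ - ‖Matrix.toEuclideanLin (A - B) x‖ := by
          gcongr
          · exact sigmaMin_le_norm_toEuclideanLin A hx
          · simpa only [hx, mul_one] using norm_toEuclideanLin_le_specNorm_mul (A - B) x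
      _ ≤ ‖Matrix.toEuclideanLin B x‖ := by
          rw [map_sub, LinearMap.sub_apply, sub_le_comm]
          exact norm_sub_norm_le _ _

end SingularValues

open scoped Matrix.Norms.L2Operator in
theorem stmt_13_general {m r k n : Type*} [Fintype m] [Fintype r] [Fintype k] [Fintype n]
    [DecidableEq m] [DecidableEq r] [DecidableEq k] [DecidableEq n]
    (Q : Matrix m r ℝ) {ω : ℝ} (hQ : specNorm (1 - Qᵀ * Q) ≤ ω)
    (X D : Matrix m k ℝ) (T : Matrix k n ℝ) :
    sigmaMin (((1 - Q * Qᵀ) * X + D) * T) - (1 + ω) * (ω * specNorm X + specNorm D) * specNorm T ≤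
      sigmaMin ((1 - Q * Qᵀ) * (((1 - Q * Qᵀ) * X + D) * T)) := by
  refine le_trans (sub_le_sub_left ?_ _) (sigmaMin_sub_specNorm_sub_le _ _)
  simp only [specNorm_eq_l2_opNorm, ← Matrix.conjTranspose_eq_transpose_of_trivial] at hQ ⊢
  have ω_nonneg : 0 ≤ ω := (norm_nonneg _).trans hQ
  have norm_sq_le : ‖Q‖ ^ 2 ≤ 1 + ω := (l2_opNorm_sq_le_one_add Q).trans (by gcongr)
  grw [l2_opNorm_sub_proj_mul_le, norm_sq_le, hQ]

theorem stmt_13 (m r s : ℕ)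
    (Q : Matrix (Fin m) (Fin r) ℝ) (ω : ℝ) (hω : 0 ≤ ω)
    (hQ : specNorm (1 - Qᵀ * Q) ≤ ω)
    (X ΔV : Matrix (Fin m) (Fin s) ℝ)
    (S : Matrix (Fin s) (Fin s) ℝ) (hS : IsUnit S.det) :
    sigmaMin ((1 - Q * Qᵀ) * (((1 - Q * Qᵀ) * X + ΔV) * S⁻¹)) ≥
      sigmaMin (((1 - Q * Qᵀ) * X + ΔV) * S⁻¹) -
        (1 + ω) ^ 2 * (ω * specNorm X + specNorm ΔV) * specNorm S⁻¹ := by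
  refine (stmt_13_general Q hQ X ΔV S⁻¹).trans' (sub_le_sub_left ?_ _)
  grw [specNorm, specNorm, specNorm, ← le_self_pow₀ (by linarith : 1 ≤ 1 + ω) two_ne_zero]
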